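/- arXiv:2505.07679 — 2 statements merged into one kernel-verified Lean document; each statement's English description precedes it below -/
import Mathlib

section
/- Let G be a torsion-free additive abelian group, let h ∈ ℕ with h ≥ 2, and let k ∈ ℕ with k ≥ 4. Then no subset A of G with |A| = k has h-fold sumset hA whose cardinality lies in the interval [hk−h+2, hk−1]; that is, 𝓡_G(h,k) ∩ [hk−h+2, hk−1] = ∅. -/
/-!
A torsion-free abelian group embeds in its divisible hull, a `ℚ`-vector space, so it carries a
translation-invariant linear order (lexicographic in a basis). In an ordered group, if
`|A + B| < |A| + |B|` and `|B| ≥ 2`, then every gap between consecutive elements of `A` equals the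
gap between the two least elements of `B` (`gap_eq`), so `A` is an arithmetic progression
(`isAP_of_card_add_lt`).

Applying this with `B = nA`: if `A` is not an arithmetic progression, then
`|(n+1)A| ≥ |nA| + |A|` for every `n ≥ 1`, whence `|hA| ≥ h|A|` (`mul_card_le_card_nsmul`).
If `A` is an arithmetic progression, then `|hA| ≤ h(|A| - 1) + 1` (`card_nsmul_le_of_isAP`).
So no size lies strictly between `hk - h + 1` and `hk`.
-/

/-- The `h`-fold sumset of a set `A`: all sums `x₁ + ⋯ + x_h` with each `xᵢ ∈ A`. -/
def hfold {G : Type*} [AddCommMonoid G] (h : ℕ) (A : Set G) : Set G :=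
  {x | ∃ f : Fin h → G, (∀ i, f i ∈ A) ∧ ∑ i, f i = x}

/-- `x` is a trivial element of the `h`-fold sumset of `A` if `x = (h-i) • u + i • v`
for some `0 ≤ i ≤ h` and some pair `u < v` of consecutive elements of `A`
(i.e. `u, v ∈ A` with no element of `A` strictly between them). -/
def IsTrivial {G : Type*} [AddCommMonoid G] [LinearOrder G] (h : ℕ) (A : Set G) (x : G) : Prop :=
  ∃ u ∈ A, ∃ v ∈ A, u < v ∧ (∀ w ∈ A, ¬(u < w ∧ w < v)) ∧
    ∃ i : ℕ, i ≤ h ∧ x = (h - i) • u + i • v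

open scoped Pointwise

/-- `A` is contained in an arithmetic progression of length `|A|` (equivalently, when `A` is
nonempty, it is equal to one). -/
def IsAP {G : Type*} [AddCommGroup G] (A : Finset G) : Prop :=
  ∃ a d : G, ∀ x ∈ A, ∃ i < A.card, x = a + i • d

theorem exists_linearOrder_of_torsionFree (G : Type*) [AddCommGroup G] [IsAddTorsionFree G] :
    ∃ _ : LinearOrder G, IsOrderedAddMonoid G := by
  let b := Module.Basis.ofVectorSpace ℚ (DivisibleHull G)
  let _ : LinearOrder (Module.Basis.ofVectorSpaceIndex ℚ (DivisibleHull G)) :=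
    IsWellOrder.linearOrder WellOrderingRel
  let f : G → Lex (Module.Basis.ofVectorSpaceIndex ℚ (DivisibleHull G) →₀ ℚ) :=
    fun g => toLex (b.repr (DivisibleHull.coeAddMonoidHom G g))
  have hf : Function.Injective f := fun x y hxy =>
    DivisibleHull.coe_injective (b.repr.injective (toLex.injective hxy))
  have hadd : ∀ x y, f (x + y) = f x + f y := fun x y => by simp [f]
  let _ : LinearOrder G := LinearOrder.lift' f hf
  refine ⟨inferInstance, { add_le_add_left := fun x y hxy z => ?_ }⟩
  change f _ ≤ f _
  rw [hadd, hadd]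
  exact add_le_add_left (show f x ≤ f y from hxy) _

/-- If a gap `a' - a` of `A` differed from the first gap `b' - b` of `B`, then
`a + b'` and `a' + b` would both fit between the translates of the lower part of `A` by `b` and of
the upper part of `A` by `b'`; continuing with `max A + B` would give `|A| + |B|` sums. -/
theorem gap_eq {G : Type*} [AddCommGroup G] [LinearOrder G] [IsOrderedAddMonoid G]
    {A B : Finset G} (hAB : (A + B).card < A.card + B.card)
    {a a' b b' : G} (ha : a ∈ A) (ha' : a' ∈ A) (haa : a < a')
    (hA : ∀ w ∈ A, w ≤ a ∨ a' ≤ w)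
    (hb : b ∈ B) (hb' : b' ∈ B) (hbb : b < b') (hB : ∀ w ∈ B, w = b ∨ b' ≤ w) :
    a' - a = b' - b := by
  by_contra hne
  obtain ⟨M, hM, hMmax⟩ : ∃ M ∈ A, ∀ x ∈ A, x ≤ M :=
    ⟨A.max' ⟨a, ha⟩, A.max'_mem _, fun x hx => A.le_max' x hx⟩
  set P := (A.filter (· ≤ a)).image (· + b) with hP
  set Q : Finset G := {a + b', a' + b} with hQ
  set R := (A.filter (¬ · ≤ a)).image (· + b') with hR
  set T := (B.filter (b' < ·)).image (M + ·) with hT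
  have hsub : P ∪ (Q ∪ (R ∪ T)) ⊆ A + B := by
    intro x hx
    simp only [hP, hQ, hR, hT, Finset.mem_union, Finset.mem_image, Finset.mem_filter,
      Finset.mem_insert, Finset.mem_singleton] at hx
    rcases hx with ⟨y, ⟨hy, -⟩, rfl⟩ | (rfl | rfl) | ⟨y, ⟨hy, -⟩, rfl⟩ | ⟨y, ⟨hy, -⟩, rfl⟩
    all_goals exact Finset.add_mem_add (by assumption) (by assumption)
  have hPle : ∀ x ∈ P, x ≤ a + b := by
    intro x hx
    obtain ⟨y, hy, rfl⟩ := Finset.mem_image.1 hx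
    exact add_le_add_left (Finset.mem_filter.1 hy).2 b
  have hQlt : ∀ x ∈ Q, a + b < x ∧ x < a' + b' := by
    intro x hx
    simp only [hQ, Finset.mem_insert, Finset.mem_singleton] at hx
    rcases hx with rfl | rfl
    · exact ⟨by simpa using hbb, by simpa using haa⟩
    · exact ⟨by simpa using haa, by simpa using hbb⟩
  have hRle : ∀ x ∈ R, a' + b' ≤ x ∧ x ≤ M + b' := by
    intro x hx
    obtain ⟨y, hy, rfl⟩ := Finset.mem_image.1 hx
    obtain ⟨hyA, hya⟩ := Finset.mem_filter.1 hy
    exact ⟨add_le_add_left ((hA y hyA).resolve_left hya) b', add_le_add_left (hMmax y hyA) b'⟩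
  have hTlt : ∀ x ∈ T, M + b' < x := by
    intro x hx
    obtain ⟨y, hy, rfl⟩ := Finset.mem_image.1 hx
    simpa using (Finset.mem_filter.1 hy).2
  have hMa : a' + b' ≤ M + b' := add_le_add_left (hMmax a' ha') b'
  have hRT : Disjoint R T := Finset.disjoint_left.2 fun x h1 h2 =>
    absurd (hRle x h1).2 (not_le.2 (hTlt x h2))
  have hQRT : Disjoint Q (R ∪ T) := Finset.disjoint_left.2 fun x h1 h2 => by
    rcases Finset.mem_union.1 h2 with h2 | h2
    · exact absurd (hRle x h2).1 (not_le.2 (hQlt x h1).2)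
    · exact absurd ((hMa.trans_lt (hTlt x h2)).le) (not_le.2 (hQlt x h1).2)
  have hab : a + b < a' + b' := add_lt_add haa hbb
  have hPQRT : Disjoint P (Q ∪ (R ∪ T)) := Finset.disjoint_left.2 fun x h1 h2 => by
    have h0 := hPle x h1
    rcases Finset.mem_union.1 h2 with h2 | h2
    · exact absurd h0 (not_le.2 (hQlt x h2).1)
    · rcases Finset.mem_union.1 h2 with h2 | h2
      · exact absurd h0 (not_le.2 (hab.trans_le (hRle x h2).1))
      · exact absurd h0 (not_le.2 (hab.trans_le (hMa.trans (hTlt x h2).le)))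
  have hQcard : Q.card = 2 := Finset.card_pair fun h => hne (by
    rw [sub_eq_sub_iff_add_eq_add, ← h, add_comm])
  have hPR : P.card + R.card = A.card := by
    rw [hP, hR, Finset.card_image_of_injective _ (add_left_injective b),
      Finset.card_image_of_injective _ (add_left_injective b')]
    exact Finset.card_filter_add_card_filter_not _
  have hTcard : B.card ≤ T.card + 2 := by
    rw [hT, Finset.card_image_of_injective _ (add_right_injective M)]
    calc B.card ≤ (B.filter (b' < ·) ∪ {b, b'}).card := Finset.card_le_card fun x hx => by
          rcases hB x hx with rfl | h
          · simp
          · rcases h.eq_or_lt with rfl | h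
            · simp
            · simp [hx, h]
      _ ≤ _ := (Finset.card_union_le _ _).trans (by gcongr; exact Finset.card_le_two)
  have hle := Finset.card_le_card hsub
  rw [Finset.card_union_of_disjoint hPQRT, Finset.card_union_of_disjoint hQRT,
    Finset.card_union_of_disjoint hRT] at hle
  omega

theorem isAP_of_card_add_lt {G : Type*} [AddCommGroup G] [LinearOrder G] [IsOrderedAddMonoid G]
    {A B : Finset G} (hA : A.Nonempty) (hB : 2 ≤ B.card)
    (hAB : (A + B).card < A.card + B.card) : IsAP A := by
  have hBne : B.Nonempty := Finset.card_pos.1 (by omega)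
  set b := B.min' hBne with hb
  have hbB : b ∈ B := B.min'_mem _
  have hBe : (B.erase b).Nonempty := by
    apply Finset.card_pos.1
    rw [Finset.card_erase_of_mem hbB]
    omega
  set b' := (B.erase b).min' hBe with hb'
  have hb'B : b' ∈ B.erase b := Finset.min'_mem _ _
  obtain ⟨hb'ne, hb'B⟩ := Finset.mem_erase.1 hb'B
  have hbb : b < b' := lt_of_le_of_ne (B.min'_le b' hb'B) hb'ne.symm
  have hBgap : ∀ w ∈ B, w = b ∨ b' ≤ w := fun w hw => by
    by_cases hwb : w = b
    · exact Or.inl hwb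
    · exact Or.inr (Finset.min'_le _ _ (Finset.mem_erase.2 ⟨hwb, hw⟩))
  let e := A.orderEmbOfFin rfl
  have hpos : 0 < A.card := hA.card_pos
  have hrange : ∀ x ∈ A, ∃ i, e i = x := fun x hx => by
    have : x ∈ Set.range e := by rw [Finset.range_orderEmbOfFin]; exact hx
    exact this
  have hstep : ∀ i (hi : i < A.card), e ⟨i, hi⟩ = e ⟨0, hpos⟩ + i • (b' - b) := by
    intro i
    induction i with
    | zero => simp
    | succ i ih =>
      intro hi
      have hgap := gap_eq hAB (a := e ⟨i, by omega⟩) (a' := e ⟨i + 1, hi⟩)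
        (A.orderEmbOfFin_mem rfl _) (A.orderEmbOfFin_mem rfl _)
        (e.strictMono (by simp)) (fun w hw => by
          obtain ⟨⟨j, hj⟩, rfl⟩ := hrange w hw
          rw [e.le_iff_le, e.le_iff_le, Fin.mk_le_mk, Fin.mk_le_mk]
          omega) hbB hb'B hbb hBgap
      rw [sub_eq_iff_eq_add.1 hgap, ih, succ_nsmul]
      abel
  refine ⟨e ⟨0, hpos⟩, b' - b, fun x hx => ?_⟩
  obtain ⟨⟨i, hi⟩, rfl⟩ := hrange x hx
  exact ⟨i, hi, hstep i hi⟩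

theorem mul_card_le_card_nsmul {G : Type*} [AddCommGroup G] [LinearOrder G]
    [IsOrderedAddMonoid G] {A : Finset G} (hA : 2 ≤ A.card) (hAP : ¬ IsAP A)
    {n : ℕ} (hn : 1 ≤ n) : n * A.card ≤ (n • A).card := by
  induction n, hn using Nat.le_induction with
  | base => simp
  | succ n hn ih =>
    have h2 : 2 ≤ (n • A).card := by nlinarith
    have hAne : A.Nonempty := Finset.card_pos.1 (by omega)
    have := not_lt.1 fun h => hAP (isAP_of_card_add_lt hAne h2 h)
    rw [succ_nsmul', add_mul, one_mul]
    omega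

theorem card_nsmul_le_of_isAP {G : Type*} [AddCommGroup G] [DecidableEq G]
    {A : Finset G} (hAP : IsAP A) (n : ℕ) : (n • A).card ≤ n * (A.card - 1) + 1 := by
  obtain ⟨a, d, hAd⟩ := hAP
  have hsub : n • A ⊆ (Finset.range (n * (A.card - 1) + 1)).image fun i => n • a + i • d := by
    induction n with
    | zero => exact fun x hx => by simpa using hx
    | succ n ih =>
      intro x hx
      rw [succ_nsmul] at hx
      obtain ⟨y, hy, z, hz, rfl⟩ := Finset.mem_add.1 hx
      obtain ⟨i, hi, rfl⟩ := Finset.mem_image.1 (ih hy)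
      obtain ⟨j, hj, rfl⟩ := hAd z hz
      rw [Finset.mem_range] at hi
      refine Finset.mem_image.2 ⟨i + j, ?_, ?_⟩
      · rw [Finset.mem_range, add_mul, one_mul]
        omega
      · simp only [succ_nsmul, add_nsmul]
        abel
  exact (Finset.card_le_card hsub).trans (Finset.card_image_le.trans (by simp))

theorem hfold_coe {G : Type*} [AddCommGroup G] [DecidableEq G] (h : ℕ) (A : Finset G) :
    hfold h (A : Set G) = ↑(h • A) := by
  ext x
  rw [Finset.coe_nsmul, Set.mem_nsmul_iff_sum]
  rfl

/-- For a torsion-free additive abelian group `G`, `h ≥ 2`, `k ≥ 4`,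
the set of attained sizes `𝓡_G(h,k)` misses the whole interval `[hk-h+2, hk-1]`. -/
theorem stmt_0 {G : Type*} [AddCommGroup G]
    (hTF : ∀ g : G, g ≠ 0 → ∀ n : ℕ, 1 ≤ n → n • g ≠ 0)
    (h k : ℕ) (hh : 2 ≤ h) (hk : 4 ≤ k) :
    {n : ℕ | ∃ A : Set G, A.ncard = k ∧ (hfold h A).ncard = n} ∩
      Set.Icc (h * k - h + 2) (h * k - 1) = ∅ := by
  have : IsAddTorsionFree G := ⟨fun n hn x y hxy => by
    by_contra hne
    exact hTF (x - y) (sub_ne_zero.2 hne) n (by omega) (by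
      rw [nsmul_sub, sub_eq_zero]; exact hxy)⟩
  obtain ⟨_, _⟩ := exists_linearOrder_of_torsionFree G
  rw [Set.eq_empty_iff_forall_notMem]
  rintro n ⟨⟨A, hA, rfl⟩, hlo, hhi⟩
  obtain ⟨A, rfl⟩ := (Set.finite_of_ncard_pos (by omega : 0 < A.ncard)).exists_finset_coe
  rw [Set.ncard_coe_finset] at hA
  rw [hfold_coe, Set.ncard_coe_finset] at hlo hhi
  subst hA
  have hpos : 0 < h * A.card := by positivity
  by_cases hAP : IsAP A
  · have := card_nsmul_le_of_isAP hAP h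
    rw [Nat.mul_sub_one] at this
    omega
  · have := mul_card_le_card_nsmul (by omega) hAP (show 1 ≤ h by omega)
    omega
end

section
/- Let G be a torsion-free additive abelian group containing an element a ≠ 0, let h ∈ ℕ with h ≥ 2, and let k ∈ ℕ with k ≥ 3. Then hk ∈ 𝓡_G(h,k); that is, there exists a subset A ⊆ G with |A| = k and |hA| = hk. -/
/-- The integers `0, 2, 3, …, N`, i.e. the interval `[0, N]` without `1`. -/
def gapSet (N : ℕ) : Set ℕ := {n | n = 0 ∨ (2 ≤ n ∧ n ≤ N)}

lemma ncard_gapSet {N : ℕ} (hN : 1 ≤ N) : (gapSet N).ncard = N := by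
  have : gapSet N = ((insert 0 (Finset.Icc 2 N) : Finset ℕ) : Set ℕ) := by
    ext n; simp [gapSet]
  rw [this, Set.ncard_coe_finset, Finset.card_insert_of_notMem (by simp), Nat.card_Icc]
  omega

lemma mem_hfold_succ {G : Type*} [AddCommMonoid G] (h : ℕ) (A : Set G) (x : G) :
    x ∈ hfold (h + 1) A ↔ ∃ y ∈ A, ∃ z ∈ hfold h A, y + z = x := by
  constructor
  · rintro ⟨f, hf, rfl⟩
    exact ⟨f 0, hf 0, _, ⟨fun i => f i.succ, fun i => hf _, rfl⟩, (Fin.sum_univ_succ f).symm⟩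
  · rintro ⟨y, hy, _, ⟨f, hf, rfl⟩, rfl⟩
    refine ⟨Fin.cons y f, fun i => ?_, by simp [Fin.sum_univ_succ]⟩
    refine Fin.cases ?_ (fun j => ?_) i
    · simpa using hy
    · simpa using hf j

lemma hfold_gapSet {G : Type*} [AddCommMonoid G] (a : G) {k : ℕ} (hk : 3 ≤ k) (h : ℕ)
    (hh : 1 ≤ h) :
    hfold h ((fun n : ℕ => n • a) '' gapSet k) = (fun n : ℕ => n • a) '' gapSet (h * k) := by
  induction h, hh using Nat.le_induction with
  | base =>
    ext x
    rw [mem_hfold_succ]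
    constructor
    · rintro ⟨y, hy, z, ⟨f, -, rfl⟩, rfl⟩
      simpa using hy
    · intro hx
      exact ⟨x, by simpa using hx, 0, ⟨Fin.elim0, fun i => i.elim0, by simp⟩, by simp⟩
  | succ h hh ih =>
    ext x
    rw [mem_hfold_succ, ih]
    have hm : k ≤ h * k := Nat.le_mul_of_pos_left k hh
    rw [Nat.succ_mul]
    generalize h * k = m at hm
    constructor
    · rintro ⟨_, ⟨p, hp, rfl⟩, _, ⟨q, hq, rfl⟩, rfl⟩
      refine ⟨p + q, ?_, add_nsmul a p q⟩
      simp only [gapSet, Set.mem_setOf_eq] at *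
      omega
    · rintro ⟨n, hn, rfl⟩
      have key : ∃ p ∈ gapSet k, ∃ q ∈ gapSet m, p + q = n := by
        simp only [gapSet, Set.mem_setOf_eq] at *
        by_cases h1 : n ≤ m
        · exact ⟨0, by omega, n, by omega, by omega⟩
        · by_cases h2 : n = k + 1
          -- Removing the largest summand `k` would leave the gap `1`, so split off `2` instead.
          · exact ⟨2, by omega, k - 1, by omega, by omega⟩
          · exact ⟨k, by omega, n - k, by omega, by omega⟩
      obtain ⟨p, hp, q, hq, rfl⟩ := key
      exact ⟨_, ⟨p, hp, rfl⟩, _, ⟨q, hq, rfl⟩, (add_nsmul a p q).symm⟩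

/-- If `G` is a torsion-free additive abelian group containing some `a ≠ 0`,
`h ≥ 2` and `k ≥ 3`, then `hk ∈ 𝓡_G(h,k)`: some `k`-element subset `A ⊆ G` has `|hA| = hk`. -/
theorem stmt_9 {G : Type*} [AddCommGroup G]
    (hTF : ∀ g : G, g ≠ 0 → ∀ n : ℕ, 1 ≤ n → n • g ≠ 0)
    (a : G) (ha : a ≠ 0)
    (h k : ℕ) (hh : 2 ≤ h) (hk : 3 ≤ k) :
    ∃ A : Set G, A.ncard = k ∧ (hfold h A).ncard = h * k := by
  have hinj : Function.Injective (fun n : ℕ => n • a) := by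
    refine Function.Injective.of_lt_imp_ne fun p q hpq he => ?_
    refine hTF a ha (q - p) (by omega) ?_
    have hq : q • a = p • a + (q - p) • a := by
      rw [← add_nsmul, Nat.add_sub_cancel' hpq.le]
    have he' : p • a = q • a := he
    rw [hq] at he'
    simpa using he'
  refine ⟨(fun n : ℕ => n • a) '' gapSet k, ?_, ?_⟩
  · rw [Set.ncard_image_of_injective _ hinj, ncard_gapSet (by omega)]
  · rw [hfold_gapSet a hk h (by omega), Set.ncard_image_of_injective _ hinj,
      ncard_gapSet (Nat.mul_pos (by omega) (by omega))]
end
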